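/- Suppose the regularity assumption, the detectability assumption, and the initial stabilizing bound V_r⁰ ≤ ᾱ_V∘σ (with ᾱ_V of class K∞) hold. Then for every i ≥ 0 the value function V_r^i of the PI⁺ recursion is lower semicontinuous on ℝ^n. -/

import Mathlib

/-!
The induction carries three facts about `V = V_rⁱ`: it is lower semicontinuous, it is bounded by
`ᾱ_V ∘ σ`, and it admits a Bellman descent: for every `x` some `u ∈ U(x)` satisfies
`ℓ(x,u) + V(f(x,u)) ≤ V(x)` (`PIInv`).

Descent and the bound confine the minimizers defining `H = Himp V` to level sets of `ℓ(x,·)` of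
locally bounded height, so `H` has nonempty values and is locally bounded. The graph of `Hreg H` is
the closure of the graph of `H` (`graph_Hreg`); hence `Hreg H` has a closed graph, is locally
bounded, and stays inside `U`.

For any map `K` with nonempty values, closed graph and local boundedness, the infimum of `J(x,h)`
over selections `h` of `K` is the limit of value iteration from `0` (`iInf_Jcost_eq`). Every
iterate is lower semicontinuous, as a minimum of a lower semicontinuous function over a closed and
locally bounded map, and therefore so is the supremum of the increasing iterates. A compactness
argument shows that this supremum satisfies Bellman descent on `K`, and following a descending
selection costs no more than the supremum because stage costs are nonnegative
(`Jcost_le_of_descent`). In particular nonstationary input choices are no better than selections.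

Finally, any selection of `H` is a selection of `Hreg H` along which `V` descends, so
`V_rⁱ⁺¹ ≤ V_rⁱ`, and the bound propagates.
-/

open scoped NNReal ENNReal Topology

noncomputable section

/-- A class-K∞ function on `ℝ≥0 ≃ [0,∞)`. -/
def ClassKInf (α : ℝ≥0 → ℝ≥0) : Prop :=
  Continuous α ∧ StrictMono α ∧ α 0 = 0 ∧ ∀ M : ℝ≥0, ∃ s : ℝ≥0, M ≤ α s

/-- A class-KL function on `[0,∞) × [0,∞)`. -/
def ClassKL (β : ℝ≥0 → ℝ≥0 → ℝ≥0) : Prop :=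
  (∀ t, Continuous fun s => β s t) ∧ (∀ t, Monotone fun s => β s t) ∧
    (∀ t, β 0 t = 0) ∧ (∀ s, Antitone fun t => β s t) ∧
    (∀ s, Filter.Tendsto (fun t => β s t) Filter.atTop (nhds 0))

variable {n m : ℕ}

/-- Closed-loop solution of `x(k+1) = f(x(k), h(x(k)))` from `x`. -/
def phiCL (f : (Fin n → ℝ) → (Fin m → ℝ) → Fin n → ℝ)
    (h : (Fin n → ℝ) → Fin m → ℝ) (x : Fin n → ℝ) : ℕ → Fin n → ℝ
  | 0 => x
  | k + 1 => f (phiCL f h x k) (h (phiCL f h x k))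

/-- Infinite-horizon closed-loop cost `J(x,h)`, valued in `[0,∞]`. -/
def Jcost (f : (Fin n → ℝ) → (Fin m → ℝ) → Fin n → ℝ)
    (ℓ : (Fin n → ℝ) → (Fin m → ℝ) → ℝ≥0)
    (x : Fin n → ℝ) (h : (Fin n → ℝ) → Fin m → ℝ) : ℝ≥0∞ :=
  ∑' k : ℕ, (ℓ (phiCL f h x k) (h (phiCL f h x k)) : ℝ≥0∞)

/-- Improvement step: minimizers of `u ↦ ℓ(x,u) + V(f(x,u))` over `U(x)`. -/
def Himp (f : (Fin n → ℝ) → (Fin m → ℝ) → Fin n → ℝ)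
    (ℓ : (Fin n → ℝ) → (Fin m → ℝ) → ℝ≥0)
    (Uset : (Fin n → ℝ) → Set (Fin m → ℝ))
    (V : (Fin n → ℝ) → ℝ≥0∞) (x : Fin n → ℝ) : Set (Fin m → ℝ) :=
  {u ∈ Uset x | ∀ u' ∈ Uset x,
    (ℓ x u : ℝ≥0∞) + V (f x u) ≤ (ℓ x u' : ℝ≥0∞) + V (f x u')}

/-- Outer semicontinuous regularization of a set-valued map:
`H_r(x) = ⋂_{δ>0} closure(∪_{|y-x|≤δ} H(y))`. -/
def Hreg (H : (Fin n → ℝ) → Set (Fin m → ℝ)) (x : Fin n → ℝ) : Set (Fin m → ℝ) :=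
  ⋂ (δ : ℝ) (_ : 0 < δ), closure (⋃ y ∈ Metric.closedBall x δ, H y)

/-- The PI⁺ value functions: `V_r⁰ = J(·,h⁰)` and `V_r^{i+1}(x)` is the
infimum in `[0,∞]` of `J(x,h)` over all selections `h` of
`H_r^{i+1} = Hreg (Himp V_r^i)`. -/
def VR (f : (Fin n → ℝ) → (Fin m → ℝ) → Fin n → ℝ)
    (ℓ : (Fin n → ℝ) → (Fin m → ℝ) → ℝ≥0)
    (Uset : (Fin n → ℝ) → Set (Fin m → ℝ))
    (h0 : (Fin n → ℝ) → Fin m → ℝ) : ℕ → (Fin n → ℝ) → ℝ≥0∞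
  | 0 => fun x => Jcost f ℓ x h0
  | i + 1 => fun x =>
      ⨅ (h : (Fin n → ℝ) → Fin m → ℝ)
        (_ : ∀ z, h z ∈ Hreg (Himp f ℓ Uset (VR f ℓ Uset h0 i)) z),
        Jcost f ℓ x h

/-- The PI⁺ improvement maps `Hⁱ` (with `H⁰(x) = {h⁰(x)}`). -/
def HseqPI (f : (Fin n → ℝ) → (Fin m → ℝ) → Fin n → ℝ)
    (ℓ : (Fin n → ℝ) → (Fin m → ℝ) → ℝ≥0)
    (Uset : (Fin n → ℝ) → Set (Fin m → ℝ))
    (h0 : (Fin n → ℝ) → Fin m → ℝ) : ℕ → (Fin n → ℝ) → Set (Fin m → ℝ)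
  | 0 => fun x => {h0 x}
  | i + 1 => Himp f ℓ Uset (VR f ℓ Uset h0 i)

/-- The PI⁺ regularized maps `H_rⁱ` (with `H_r⁰(x) = {h⁰(x)}`). -/
def HrseqPI (f : (Fin n → ℝ) → (Fin m → ℝ) → Fin n → ℝ)
    (ℓ : (Fin n → ℝ) → (Fin m → ℝ) → ℝ≥0)
    (Uset : (Fin n → ℝ) → Set (Fin m → ℝ))
    (h0 : (Fin n → ℝ) → Fin m → ℝ) : ℕ → (Fin n → ℝ) → Set (Fin m → ℝ)
  | 0 => fun x => {h0 x}
  | i + 1 => Hreg (Himp f ℓ Uset (VR f ℓ Uset h0 i))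

/-- The PI⁺ selected maps `H_r^{*,i}`: minimizers of
`u ↦ ℓ(x,u) + V_r^i(f(x,u))` over `H_r^i(x)` (with `H_r^{*,0}(x) = {h⁰(x)}`). -/
def HstarPI (f : (Fin n → ℝ) → (Fin m → ℝ) → Fin n → ℝ)
    (ℓ : (Fin n → ℝ) → (Fin m → ℝ) → ℝ≥0)
    (Uset : (Fin n → ℝ) → Set (Fin m → ℝ))
    (h0 : (Fin n → ℝ) → Fin m → ℝ) : ℕ → (Fin n → ℝ) → Set (Fin m → ℝ)
  | 0 => fun x => {h0 x}
  | i + 1 => fun x =>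
      {u ∈ HrseqPI f ℓ Uset h0 (i + 1) x |
        ∀ u' ∈ HrseqPI f ℓ Uset h0 (i + 1) x,
          (ℓ x u : ℝ≥0∞) + VR f ℓ Uset h0 (i + 1) (f x u)
            ≤ (ℓ x u' : ℝ≥0∞) + VR f ℓ Uset h0 (i + 1) (f x u')}

/-! ### Costs along a policy -/

lemma phiCL_succ' (f : (Fin n → ℝ) → (Fin m → ℝ) → Fin n → ℝ)
    (h : (Fin n → ℝ) → Fin m → ℝ) (x : Fin n → ℝ) (k : ℕ) :
    phiCL f h x (k + 1) = phiCL f h (f x (h x)) k := by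
  induction k with
  | zero => rfl
  | succ k ih =>
    change f (phiCL f h x (k + 1)) (h (phiCL f h x (k + 1))) = _
    rw [ih]
    rfl

lemma Jcost_eq (f : (Fin n → ℝ) → (Fin m → ℝ) → Fin n → ℝ)
    (ℓ : (Fin n → ℝ) → (Fin m → ℝ) → ℝ≥0)
    (h : (Fin n → ℝ) → Fin m → ℝ) (x : Fin n → ℝ) :
    Jcost f ℓ x h = (ℓ x (h x) : ℝ≥0∞) + Jcost f ℓ (f x (h x)) h := by
  unfold Jcost
  rw [tsum_eq_zero_add' ENNReal.summable]
  simp only [phiCL_succ']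
  rfl

/-- A nonnegative function that decreases along a policy by at least the stage cost dominates the
cost of that policy. -/
lemma Jcost_le_of_descent {f : (Fin n → ℝ) → (Fin m → ℝ) → Fin n → ℝ}
    {ℓ : (Fin n → ℝ) → (Fin m → ℝ) → ℝ≥0} {V : (Fin n → ℝ) → ℝ≥0∞}
    {h : (Fin n → ℝ) → Fin m → ℝ}
    (hV : ∀ x, (ℓ x (h x) : ℝ≥0∞) + V (f x (h x)) ≤ V x) (x : Fin n → ℝ) :
    Jcost f ℓ x h ≤ V x := by
  unfold Jcost
  rw [ENNReal.tsum_eq_iSup_nat]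
  refine iSup_le fun N => ?_
  induction N generalizing x with
  | zero => simp
  | succ N ih =>
    rw [Finset.sum_range_succ', add_comm]
    simp only [phiCL_succ']
    exact (add_le_add le_rfl (ih _)).trans (hV x)

/-! ### Minimization over a closed, locally bounded set-valued map -/

/-- Nonempty values, closed graph and local boundedness: the conditions under which minimizing a
lower semicontinuous function over `K x` is well posed and preserves lower semicontinuity. -/
structure NiceMap (K : (Fin n → ℝ) → Set (Fin m → ℝ)) : Prop where
  nonempty : ∀ x, (K x).Nonempty
  closed : IsClosed {p : (Fin n → ℝ) × (Fin m → ℝ) | p.2 ∈ K p.1}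
  locBdd : ∀ x, ∃ C : Set (Fin m → ℝ), IsCompact C ∧ ∀ᶠ z in 𝓝 x, K z ⊆ C

lemma NiceMap.isCompact {K : (Fin n → ℝ) → Set (Fin m → ℝ)} (hK : NiceMap K) (x : Fin n → ℝ) :
    IsCompact (K x) := by
  obtain ⟨C, hC, hKC⟩ := hK.locBdd x
  refine hC.of_isClosed_subset ?_ hKC.self_of_nhds
  exact hK.closed.preimage (Continuous.prodMk_right x)

lemma NiceMap.exists_min {K : (Fin n → ℝ) → Set (Fin m → ℝ)} (hK : NiceMap K)
    {g : (Fin n → ℝ) × (Fin m → ℝ) → ℝ≥0∞} (hg : LowerSemicontinuous g) (x : Fin n → ℝ) :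
    ∃ u ∈ K x, g (x, u) = ⨅ v ∈ K x, g (x, v) := by
  have hgx : LowerSemicontinuous fun u => g (x, u) :=
    hg.comp (Continuous.prodMk_right x)
  obtain ⟨u, hu, hmin⟩ :=
    (hgx.lowerSemicontinuousOn (K x)).exists_isMinOn (hK.nonempty x) (hK.isCompact x)
  exact ⟨u, hu, le_antisymm (le_iInf₂ fun v hv => hmin hv) (iInf₂_le u hu)⟩

/-- Minimizing over a closed, locally bounded map preserves lower semicontinuity. -/
lemma NiceMap.lsc_min {K : (Fin n → ℝ) → Set (Fin m → ℝ)} (hK : NiceMap K)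
    {g : (Fin n → ℝ) × (Fin m → ℝ) → ℝ≥0∞} (hg : LowerSemicontinuous g) :
    LowerSemicontinuous fun x => ⨅ v ∈ K x, g (x, v) := by
  intro x y hy
  obtain ⟨C, hC, hKC⟩ := hK.locBdd x
  have hcl : IsClosed {p : (Fin n → ℝ) × (Fin m → ℝ) | p.2 ∈ K p.1 ∧ g p ≤ y} :=
    hK.closed.inter (hg.isClosed_preimage y)
  -- The tube lemma makes "no point of `C` is in `K z` with value at most `y`" an open condition.
  have key : ∀ᶠ z in 𝓝 x, ∀ u ∈ C, ¬ (u ∈ K z ∧ g (z, u) ≤ y) := by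
    refine hC.eventually_forall_of_forall_eventually fun u _ => ?_
    refine hcl.isOpen_compl.mem_nhds ?_
    rintro ⟨hu, hle⟩
    exact absurd (hy.trans_le ((iInf₂_le u hu).trans hle)) (lt_irrefl y)
  filter_upwards [key, hKC] with z hz hzC
  obtain ⟨u, hu, hmin⟩ := hK.exists_min hg z
  rw [← hmin]
  exact not_le.1 fun hle => hz u (hzC hu) ⟨hu, hle⟩

/-! ### Value iteration and the optimal selection -/

/-- Value iteration from `0` for the cost `ℓ`, with inputs constrained to `K`: the optimal cost
over the first `N` stages. -/
def valIter (f : (Fin n → ℝ) → (Fin m → ℝ) → Fin n → ℝ)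
    (ℓ : (Fin n → ℝ) → (Fin m → ℝ) → ℝ≥0)
    (K : (Fin n → ℝ) → Set (Fin m → ℝ)) : ℕ → (Fin n → ℝ) → ℝ≥0∞
  | 0 => fun _ => 0
  | N + 1 => fun x => ⨅ u ∈ K x, ((ℓ x u : ℝ≥0∞) + valIter f ℓ K N (f x u))

lemma lsc_stage {f : (Fin n → ℝ) → (Fin m → ℝ) → Fin n → ℝ}
    {ℓ : (Fin n → ℝ) → (Fin m → ℝ) → ℝ≥0}
    (hf : Continuous fun p : (Fin n → ℝ) × (Fin m → ℝ) => f p.1 p.2)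
    (hl : Continuous fun p : (Fin n → ℝ) × (Fin m → ℝ) => ℓ p.1 p.2)
    {V : (Fin n → ℝ) → ℝ≥0∞} (hV : LowerSemicontinuous V) :
    LowerSemicontinuous fun p : (Fin n → ℝ) × (Fin m → ℝ) =>
      (ℓ p.1 p.2 : ℝ≥0∞) + V (f p.1 p.2) :=
  (ENNReal.continuous_coe.comp hl).lowerSemicontinuous.add (hV.comp hf)

lemma valIter_mono (f : (Fin n → ℝ) → (Fin m → ℝ) → Fin n → ℝ)
    (ℓ : (Fin n → ℝ) → (Fin m → ℝ) → ℝ≥0)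
    (K : (Fin n → ℝ) → Set (Fin m → ℝ)) : Monotone (valIter f ℓ K) := by
  refine monotone_nat_of_le_succ fun N => ?_
  induction N with
  | zero => exact fun x => zero_le
  | succ N ih => exact fun x => iInf₂_mono fun u _ => add_le_add le_rfl (ih _)

lemma valIter_lsc {f : (Fin n → ℝ) → (Fin m → ℝ) → Fin n → ℝ}
    {ℓ : (Fin n → ℝ) → (Fin m → ℝ) → ℝ≥0}
    (hf : Continuous fun p : (Fin n → ℝ) × (Fin m → ℝ) => f p.1 p.2)
    (hl : Continuous fun p : (Fin n → ℝ) × (Fin m → ℝ) => ℓ p.1 p.2)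
    {K : (Fin n → ℝ) → Set (Fin m → ℝ)} (hK : NiceMap K) (N : ℕ) :
    LowerSemicontinuous (valIter f ℓ K N) := by
  induction N with
  | zero => exact lowerSemicontinuous_const
  | succ N ih => exact hK.lsc_min (lsc_stage hf hl ih)

lemma valIter_le_Jcost {f : (Fin n → ℝ) → (Fin m → ℝ) → Fin n → ℝ}
    {ℓ : (Fin n → ℝ) → (Fin m → ℝ) → ℝ≥0}
    {K : (Fin n → ℝ) → Set (Fin m → ℝ)} {h : (Fin n → ℝ) → Fin m → ℝ}
    (hh : ∀ z, h z ∈ K z) (N : ℕ) (x : Fin n → ℝ) :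
    valIter f ℓ K N x ≤ Jcost f ℓ x h := by
  induction N generalizing x with
  | zero => exact zero_le
  | succ N ih =>
    rw [Jcost_eq]
    exact (iInf₂_le (h x) (hh x)).trans (add_le_add le_rfl (ih _))

/-- The limit of value iteration satisfies Bellman descent: the inputs in `K x` that are good
enough for horizon `N` form a decreasing sequence of nonempty compact sets. -/
lemma exists_descent_iSup_valIter {f : (Fin n → ℝ) → (Fin m → ℝ) → Fin n → ℝ}
    {ℓ : (Fin n → ℝ) → (Fin m → ℝ) → ℝ≥0}
    (hf : Continuous fun p : (Fin n → ℝ) × (Fin m → ℝ) => f p.1 p.2)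
    (hl : Continuous fun p : (Fin n → ℝ) × (Fin m → ℝ) => ℓ p.1 p.2)
    {K : (Fin n → ℝ) → Set (Fin m → ℝ)} (hK : NiceMap K) (x : Fin n → ℝ) :
    ∃ u ∈ K x, (ℓ x u : ℝ≥0∞) + (⨆ N, valIter f ℓ K N (f x u)) ≤ ⨆ N, valIter f ℓ K N x := by
  set A : ℕ → Set (Fin m → ℝ) := fun N =>
    K x ∩ {u | (ℓ x u : ℝ≥0∞) + valIter f ℓ K N (f x u) ≤ ⨆ N, valIter f ℓ K N x} with hA
  have hcl : ∀ N, IsClosed (A N) := fun N => by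
    refine (hK.isCompact x).isClosed.inter ?_
    have hlsc : LowerSemicontinuous fun u => (ℓ x u : ℝ≥0∞) + valIter f ℓ K N (f x u) :=
      (lsc_stage hf hl (valIter_lsc hf hl hK N)).comp (Continuous.prodMk_right x)
    exact hlsc.isClosed_preimage _
  obtain ⟨u, hu⟩ := IsCompact.nonempty_iInter_of_sequence_nonempty_isCompact_isClosed A
    (fun N u hu => ⟨hu.1, le_trans
      (add_le_add le_rfl (valIter_mono f ℓ K N.le_succ _)) hu.2⟩)
    (fun N => by
      obtain ⟨u, hu, hmin⟩ := hK.exists_min (lsc_stage hf hl (valIter_lsc hf hl hK N)) x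
      exact ⟨u, hu, hmin.le.trans (le_iSup (fun N => valIter f ℓ K N x) (N + 1))⟩)
    ((hK.isCompact x).of_isClosed_subset (hcl 0) Set.inter_subset_left) hcl
  rw [Set.mem_iInter] at hu
  refine ⟨u, (hu 0).1, ?_⟩
  rw [ENNReal.add_iSup]
  exact iSup_le fun N => (hu N).2

/-- The optimal cost over stationary selections of `K` is the limit of value iteration. -/
lemma iInf_Jcost_eq {f : (Fin n → ℝ) → (Fin m → ℝ) → Fin n → ℝ}
    {ℓ : (Fin n → ℝ) → (Fin m → ℝ) → ℝ≥0}
    (hf : Continuous fun p : (Fin n → ℝ) × (Fin m → ℝ) => f p.1 p.2)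
    (hl : Continuous fun p : (Fin n → ℝ) × (Fin m → ℝ) => ℓ p.1 p.2)
    {K : (Fin n → ℝ) → Set (Fin m → ℝ)} (hK : NiceMap K) (x : Fin n → ℝ) :
    (⨅ (h : (Fin n → ℝ) → Fin m → ℝ) (_ : ∀ z, h z ∈ K z), Jcost f ℓ x h)
      = ⨆ N, valIter f ℓ K N x := by
  refine le_antisymm ?_ ?_
  · choose h hh hdesc using exists_descent_iSup_valIter hf hl hK
    exact (iInf₂_le h hh).trans
      (Jcost_le_of_descent (V := fun x => ⨆ N, valIter f ℓ K N x) hdesc x)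
  · exact le_iInf₂ fun h hh => iSup_le fun N => valIter_le_Jcost hh N x

/-! ### The regularized improvement map -/

/-- Outer semicontinuous regularization is closure of the graph. -/
lemma graph_Hreg (H : (Fin n → ℝ) → Set (Fin m → ℝ)) :
    {p : (Fin n → ℝ) × (Fin m → ℝ) | p.2 ∈ Hreg H p.1}
      = closure {p : (Fin n → ℝ) × (Fin m → ℝ) | p.2 ∈ H p.1} := by
  ext ⟨x, u⟩
  simp only [Hreg, Set.mem_ofPred_eq, Set.mem_iInter, Metric.mem_closure_iff]
  constructor
  · intro hxu ε hε
    obtain ⟨v, hv, huv⟩ := hxu (ε / 2) (half_pos hε) ε hε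
    simp only [Set.mem_iUnion, exists_prop] at hv
    obtain ⟨y, hy, hvy⟩ := hv
    refine ⟨(y, v), hvy, ?_⟩
    rw [Prod.dist_eq]
    rw [Metric.mem_closedBall, dist_comm] at hy
    exact max_lt (by linarith) huv
  · intro hxu δ hδ ε hε
    obtain ⟨⟨y, v⟩, hv, hd⟩ := hxu (min δ ε) (lt_min hδ hε)
    rw [Prod.dist_eq, max_lt_iff] at hd
    refine ⟨v, ?_, hd.2.trans_le (min_le_right _ _)⟩
    simp only [Set.mem_iUnion, exists_prop]
    refine ⟨y, ?_, hv⟩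
    rw [Metric.mem_closedBall, dist_comm]
    exact hd.1.le.trans (min_le_left _ _)

lemma subset_Hreg (H : (Fin n → ℝ) → Set (Fin m → ℝ)) (x : Fin n → ℝ) : H x ⊆ Hreg H x := by
  intro u hu
  have : (x, u) ∈ {p : (Fin n → ℝ) × (Fin m → ℝ) | p.2 ∈ Hreg H p.1} := by
    rw [graph_Hreg]
    exact subset_closure hu
  exact this

lemma Hreg_subset {H Uset : (Fin n → ℝ) → Set (Fin m → ℝ)}
    (hU : IsClosed {p : (Fin n → ℝ) × (Fin m → ℝ) | p.2 ∈ Uset p.1})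
    (hHU : ∀ x, H x ⊆ Uset x) (x : Fin n → ℝ) : Hreg H x ⊆ Uset x := by
  intro u hu
  have hmem : (x, u) ∈ {p : (Fin n → ℝ) × (Fin m → ℝ) | p.2 ∈ Hreg H p.1} := hu
  rw [graph_Hreg] at hmem
  exact closure_minimal (fun p hp => hHU p.1 hp) hU hmem

lemma Hreg_locBdd {H : (Fin n → ℝ) → Set (Fin m → ℝ)} {x : Fin n → ℝ} {C : Set (Fin m → ℝ)}
    (hC : IsClosed C) (hH : ∀ᶠ z in 𝓝 x, H z ⊆ C) : ∀ᶠ z in 𝓝 x, Hreg H z ⊆ C := by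
  obtain ⟨ε, hε, hball⟩ := Metric.eventually_nhds_iff.1 hH
  filter_upwards [Metric.ball_mem_nhds x (half_pos hε)] with z hz u hu
  simp only [Hreg, Set.mem_iInter] at hu
  refine closure_minimal (Set.iUnion₂_subset fun y hy => hball ?_) hC (hu (ε / 2) (half_pos hε))
  have h1 := dist_triangle y z x
  rw [Metric.mem_closedBall] at hy
  rw [Metric.mem_ball] at hz
  linarith

/-! ### The inductive step -/

/-- The invariant of the recursion: lower semicontinuity, a finite upper bound `b`, and Bellman
descent with admissible inputs. -/
structure PIInv (f : (Fin n → ℝ) → (Fin m → ℝ) → Fin n → ℝ)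
    (ℓ : (Fin n → ℝ) → (Fin m → ℝ) → ℝ≥0) (Uset : (Fin n → ℝ) → Set (Fin m → ℝ))
    (b : (Fin n → ℝ) → ℝ≥0) (V : (Fin n → ℝ) → ℝ≥0∞) : Prop where
  lsc : LowerSemicontinuous V
  bound : ∀ x, V x ≤ (b x : ℝ≥0∞)
  descent : ∀ x, ∃ u ∈ Uset x, (ℓ x u : ℝ≥0∞) + V (f x u) ≤ V x

section step

variable {f : (Fin n → ℝ) → (Fin m → ℝ) → Fin n → ℝ}
  {ℓ : (Fin n → ℝ) → (Fin m → ℝ) → ℝ≥0} {Uset : (Fin n → ℝ) → Set (Fin m → ℝ)}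
  {b : (Fin n → ℝ) → ℝ≥0} {V : (Fin n → ℝ) → ℝ≥0∞}

lemma PIInv.descent_Himp (hV : PIInv f ℓ Uset b V) {x : Fin n → ℝ} {u : Fin m → ℝ}
    (hu : u ∈ Himp f ℓ Uset V x) : (ℓ x u : ℝ≥0∞) + V (f x u) ≤ V x := by
  obtain ⟨v, hv, hle⟩ := hV.descent x
  exact (hu.2 v hv).trans hle

lemma PIInv.stage_le (hV : PIInv f ℓ Uset b V) {x : Fin n → ℝ} {u : Fin m → ℝ}
    (hu : (ℓ x u : ℝ≥0∞) + V (f x u) ≤ V x) : ℓ x u ≤ b x :=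
  ENNReal.coe_le_coe.1 ((le_self_add.trans hu).trans (hV.bound x))

lemma PIInv.Himp_nonempty (hV : PIInv f ℓ Uset b V)
    (hf : Continuous fun p : (Fin n → ℝ) × (Fin m → ℝ) => f p.1 p.2)
    (hl : Continuous fun p : (Fin n → ℝ) × (Fin m → ℝ) => ℓ p.1 p.2)
    (hlb : ∀ (x : Fin n → ℝ) (a : ℝ), ∃ S ∈ 𝓝 x, ∃ B : Set (Fin m → ℝ),
      Bornology.IsBounded B ∧ ∀ z ∈ S, {u : Fin m → ℝ | (ℓ z u : ℝ) ≤ a} ⊆ B)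
    (hU : IsClosed {p : (Fin n → ℝ) × (Fin m → ℝ) | p.2 ∈ Uset p.1}) (x : Fin n → ℝ) :
    (Himp f ℓ Uset V x).Nonempty := by
  obtain ⟨S, hS, B, hB, hSB⟩ := hlb x (b x)
  have hcont : Continuous fun u => ℓ x u := hl.comp (Continuous.prodMk_right x)
  -- Admissible inputs outside this compact set cost more than `V x`, so they lose to the
  -- descent input.
  have hcomp : IsCompact (Uset x ∩ {u | ℓ x u ≤ b x}) := by
    refine hB.isCompact_closure.of_isClosed_subset
      ((hU.preimage (Continuous.prodMk_right x)).inter (isClosed_le hcont continuous_const)) ?_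
    exact fun u hu => subset_closure (hSB x (mem_of_mem_nhds hS) (NNReal.coe_le_coe.2 hu.2))
  obtain ⟨v, hv, hvle⟩ := hV.descent x
  have hlsc : LowerSemicontinuous fun u => (ℓ x u : ℝ≥0∞) + V (f x u) :=
    (lsc_stage hf hl hV.lsc).comp (Continuous.prodMk_right x)
  have hvmem : v ∈ Uset x ∩ {u | ℓ x u ≤ b x} := ⟨hv, hV.stage_le hvle⟩
  obtain ⟨u, hu, hmin⟩ := (hlsc.lowerSemicontinuousOn _).exists_isMinOn ⟨v, hvmem⟩ hcomp
  refine ⟨u, hu.1, fun w hw => ?_⟩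
  by_cases hwb : ℓ x w ≤ b x
  · exact hmin ⟨hw, hwb⟩
  · have huv : (ℓ x u : ℝ≥0∞) + V (f x u) ≤ (ℓ x v : ℝ≥0∞) + V (f x v) := hmin hvmem
    calc (ℓ x u : ℝ≥0∞) + V (f x u) ≤ V x := huv.trans hvle
      _ ≤ (b x : ℝ≥0∞) := hV.bound x
      _ ≤ (ℓ x w : ℝ≥0∞) := ENNReal.coe_le_coe.2 (not_le.1 hwb).le
      _ ≤ _ := le_self_add

lemma PIInv.niceMap_Hreg (hV : PIInv f ℓ Uset b V) (hb : Continuous b)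
    (hf : Continuous fun p : (Fin n → ℝ) × (Fin m → ℝ) => f p.1 p.2)
    (hl : Continuous fun p : (Fin n → ℝ) × (Fin m → ℝ) => ℓ p.1 p.2)
    (hlb : ∀ (x : Fin n → ℝ) (a : ℝ), ∃ S ∈ 𝓝 x, ∃ B : Set (Fin m → ℝ),
      Bornology.IsBounded B ∧ ∀ z ∈ S, {u : Fin m → ℝ | (ℓ z u : ℝ) ≤ a} ⊆ B)
    (hU : IsClosed {p : (Fin n → ℝ) × (Fin m → ℝ) | p.2 ∈ Uset p.1}) :
    NiceMap (Hreg (Himp f ℓ Uset V)) where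
  nonempty x := (hV.Himp_nonempty hf hl hlb hU x).mono (subset_Hreg _ x)
  closed := by
    rw [graph_Hreg]
    exact isClosed_closure
  locBdd x := by
    obtain ⟨S, hS, B, hB, hSB⟩ := hlb x ((b x + 1 : ℝ≥0) : ℝ)
    refine ⟨closure B, hB.isCompact_closure, Hreg_locBdd isClosed_closure ?_⟩
    have hbx : ∀ᶠ z in 𝓝 x, b z < b x + 1 :=
      hb.continuousAt.eventually_lt_const (lt_add_one _)
    filter_upwards [hS, hbx] with z hz hbz u hu
    exact subset_closure (hSB z hz
      (NNReal.coe_le_coe.2 ((hV.stage_le (hV.descent_Himp hu)).trans hbz.le)))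

lemma PIInv.step (hV : PIInv f ℓ Uset b V) (hb : Continuous b)
    (hf : Continuous fun p : (Fin n → ℝ) × (Fin m → ℝ) => f p.1 p.2)
    (hl : Continuous fun p : (Fin n → ℝ) × (Fin m → ℝ) => ℓ p.1 p.2)
    (hlb : ∀ (x : Fin n → ℝ) (a : ℝ), ∃ S ∈ 𝓝 x, ∃ B : Set (Fin m → ℝ),
      Bornology.IsBounded B ∧ ∀ z ∈ S, {u : Fin m → ℝ | (ℓ z u : ℝ) ≤ a} ⊆ B)
    (hU : IsClosed {p : (Fin n → ℝ) × (Fin m → ℝ) | p.2 ∈ Uset p.1}) :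
    PIInv f ℓ Uset b fun x =>
      ⨅ (h : (Fin n → ℝ) → Fin m → ℝ) (_ : ∀ z, h z ∈ Hreg (Himp f ℓ Uset V) z),
        Jcost f ℓ x h := by
  have hK := hV.niceMap_Hreg hb hf hl hlb hU
  refine ⟨?_, fun x => ?_, fun x => ?_⟩
  · simp only [iInf_Jcost_eq hf hl hK]
    exact lowerSemicontinuous_iSup fun N => valIter_lsc hf hl hK N
  · -- Policy improvement: a selection of `Himp` itself already costs at most `V`.
    choose h hh using hV.Himp_nonempty hf hl hlb hU
    exact ((iInf₂_le h fun z => subset_Hreg _ z (hh z)).trans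
      (Jcost_le_of_descent (fun z => hV.descent_Himp (hh z)) x)).trans (hV.bound x)
  · simp only [iInf_Jcost_eq hf hl hK]
    obtain ⟨u, hu, hle⟩ := exists_descent_iSup_valIter hf hl hK x
    exact ⟨u, Hreg_subset hU (fun z v hv => hv.1) x hu, hle⟩

end step

/-- every PI⁺ value function `V_rⁱ` is lower semicontinuous. -/
theorem piplus_value_lsc
    (f : (Fin n → ℝ) → (Fin m → ℝ) → Fin n → ℝ)
    (ℓ : (Fin n → ℝ) → (Fin m → ℝ) → ℝ≥0)
    (Uset : (Fin n → ℝ) → Set (Fin m → ℝ))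
    (hUne : ∀ x, (Uset x).Nonempty)
    (σ : (Fin n → ℝ) → ℝ≥0) (hσ : Continuous σ)
    -- initial admissible policy
    (h0 : (Fin n → ℝ) → Fin m → ℝ) (h0adm : ∀ x, h0 x ∈ Uset x)
    -- regularity assumption
    (hf : Continuous fun p : (Fin n → ℝ) × (Fin m → ℝ) => f p.1 p.2)
    (hl : Continuous fun p : (Fin n → ℝ) × (Fin m → ℝ) => ℓ p.1 p.2)
    (hlb : ∀ (x : Fin n → ℝ) (a : ℝ), ∃ S ∈ 𝓝 x, ∃ B : Set (Fin m → ℝ),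
      Bornology.IsBounded B ∧ ∀ z ∈ S, {u : Fin m → ℝ | (ℓ z u : ℝ) ≤ a} ⊆ B)
    (hUgraph : IsClosed {p : (Fin n → ℝ) × (Fin m → ℝ) | p.2 ∈ Uset p.1})
    (hV0lsc : LowerSemicontinuous fun x => Jcost f ℓ x h0)
    (hsublevel : ∀ Δ : ℝ≥0, 0 < Δ → IsCompact {x : Fin n → ℝ | σ x ≤ Δ})
    -- detectability assumption
    (W : (Fin n → ℝ) → ℝ≥0) (hWcont : Continuous W)
    (alphaW chiW : ℝ≥0 → ℝ≥0) (halphaW : ClassKInf alphaW) (hchiW : ClassKInf chiW)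
    (alphaWbar : ℝ≥0 → ℝ≥0) (halphaWbar_cont : Continuous alphaWbar)
    (halphaWbar_mono : Monotone alphaWbar) (halphaWbar_zero : alphaWbar 0 = 0)
    (hdet1 : ∀ x, W x ≤ alphaWbar (σ x))
    (hdet2 : ∀ x, ∀ u ∈ Uset x, W (f x u) + alphaW (σ x) ≤ W x + chiW (ℓ x u))
    -- initial stabilizing bound `V_r⁰ ≤ ᾱ_V ∘ σ`
    (alphaV : ℝ≥0 → ℝ≥0) (halphaV : ClassKInf alphaV)
    (hV0 : ∀ x, Jcost f ℓ x h0 ≤ (alphaV (σ x) : ℝ≥0∞))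
    :
    ∀ i : ℕ, LowerSemicontinuous (VR f ℓ Uset h0 i) := by
  have hinv : ∀ i, PIInv f ℓ Uset (fun x => alphaV (σ x)) (VR f ℓ Uset h0 i) := by
    intro i
    induction i with
    | zero => exact ⟨hV0lsc, hV0, fun x => ⟨h0 x, h0adm x, (Jcost_eq f ℓ h0 x).ge⟩⟩
    | succ i ih => exact ih.step (halphaV.1.comp hσ) hf hl hlb hUgraph
  exact fun i => (hinv i).lsc

end
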